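/- In the symmetric group on 6 letters {0, 1, 2, 3, 4, 5} (Equiv.Perm (Fin 6)), the subgroup generated by the three permutations given in cycle notation by (0 3)(1 4)(2 5), (1 5 4 3 2), and (2 3 5 4) has order 120. -/

import Mathlib

open Equiv

namespace HumbertFixedGroup

/-- The synthemes of a synthematic total on six letters: five fixed-point-free involutions whose
2-cycles partition the fifteen pairs of letters. -/
def syntheme : Fin 5 → Perm (Fin 6)
  | 0 => swap 0 5 * swap 1 4 * swap 2 3
  | 1 => swap 0 4 * swap 1 2 * swap 3 5
  | 2 => swap 0 1 * swap 2 5 * swap 3 4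
  | 3 => swap 0 3 * swap 1 5 * swap 2 4
  | 4 => swap 0 2 * swap 1 3 * swap 4 5

theorem mem_normalizer_range_syntheme_iff {g : Perm (Fin 6)} :
    g ∈ Subgroup.normalizer (Set.range syntheme) ↔
      ∀ m, ∃ n, ∀ x, g (syntheme m x) = syntheme n (g x) := by
  refine ⟨fun h m => ?_, fun h => Subgroup.mem_normalizer_fintype ?_⟩
  · obtain ⟨n, hn⟩ := (Subgroup.mem_set_normalizer_iff.mp h _).mp (Set.mem_range_self m)
    exact ⟨n, fun x => by simp [hn]⟩
  · rintro _ ⟨m, rfl⟩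
    obtain ⟨n, hn⟩ := h m
    exact ⟨n, (mul_inv_eq_of_eq_mul (Equiv.ext hn)).symm⟩

/-- The transpositions moving `0`, together with `1`, lie in distinct cosets of the
stabilizer of a synthematic total. -/
theorem six_le_index_normalizer :
    6 ≤ (Subgroup.normalizer (Set.range syntheme)).index := by
  have hinj : Function.Injective fun i : Fin 6 =>
      (QuotientGroup.mk (swap 0 i) :
        Perm (Fin 6) ⧸ Subgroup.normalizer (Set.range syntheme)) := by
    intro i j hij
    have hmem := mem_normalizer_range_syntheme_iff.mp (QuotientGroup.eq.mp hij)
    have key : ∀ i j : Fin 6, (∀ m, ∃ n, ∀ x, ((swap 0 i)⁻¹ * swap 0 j) (syntheme m x) =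
        syntheme n (((swap 0 i)⁻¹ * swap 0 j) x)) → i = j := by
      decide +kernel
    exact key i j hmem
  simpa [Subgroup.index] using Nat.card_le_card_of_injective _ hinj

theorem card_normalizer_le :
    Nat.card (Subgroup.normalizer (Set.range syntheme)) ≤ 120 := by
  have hcard := (Subgroup.normalizer (Set.range syntheme)).card_mul_index
  rw [Nat.card_perm, Nat.card_fin, show Nat.factorial 6 = 720 from rfl] at hcard
  nlinarith [six_le_index_normalizer]

/-- Representatives `1, a, b * a, …, b ^ 4 * a` for the cosets of the stabilizer of the letter `0`,
where `a = (0 3)(1 4)(2 5)` and `b = (1 5 4 3 2)`. -/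
def cosetRepresentative : Option (Fin 5) → Perm (Fin 6)
  | none => 1
  | some k => c[1, 5, 4, 3, 2] ^ (k : ℕ) * (c[0, 3] * c[1, 4] * c[2, 5])

/-- Words in the generators: a coset representative times an element of the
stabilizer of the letter `0`. -/
def word (x : Option (Fin 5) × Fin 5 × Fin 4) : Perm (Fin 6) :=
  cosetRepresentative x.1 * (c[1, 5, 4, 3, 2] ^ (x.2.1 : ℕ) * c[2, 3, 5, 4] ^ (x.2.2 : ℕ))

theorem word_injective : Function.Injective word := by
  have hrep : ∀ k l, cosetRepresentative k 0 = cosetRepresentative l 0 → k = l := by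
    decide +kernel
  have hb : ∀ j : Fin 5, (c[1, 5, 4, 3, 2] ^ (j : ℕ) : Perm (Fin 6)) 0 = 0 := by decide +kernel
  have hc : ∀ i : Fin 4, (c[2, 3, 5, 4] ^ (i : ℕ) : Perm (Fin 6)) 0 = 0 ∧
      (c[2, 3, 5, 4] ^ (i : ℕ) : Perm (Fin 6)) 1 = 1 := by decide +kernel
  have hb_inj : ∀ j j' : Fin 5, (c[1, 5, 4, 3, 2] ^ (j : ℕ) : Perm (Fin 6)) 1 =
      (c[1, 5, 4, 3, 2] ^ (j' : ℕ) : Perm (Fin 6)) 1 → j = j' := by decide +kernel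
  have hc_inj : ∀ i i' : Fin 4, (c[2, 3, 5, 4] ^ (i : ℕ) : Perm (Fin 6)) 2 =
      (c[2, 3, 5, 4] ^ (i' : ℕ) : Perm (Fin 6)) 2 → i = i' := by decide +kernel
  rintro ⟨k, j, i⟩ ⟨k', j', i'⟩ h
  simp only [word] at h
  obtain rfl : k = k' := hrep k k' <| by
    have h0 := DFunLike.congr_fun h 0
    rwa [Perm.mul_apply, Perm.mul_apply, Perm.mul_apply, Perm.mul_apply, (hc i).1, (hc i').1,
      hb, hb] at h0
  have h' := mul_left_cancel h
  obtain rfl : j = j' := hb_inj j j' <| by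
    have h1 := DFunLike.congr_fun h' 1
    rwa [Perm.mul_apply, Perm.mul_apply, (hc i).2, (hc i').2] at h1
  obtain rfl : i = i' := hc_inj i i' (DFunLike.congr_fun (mul_left_cancel h') 2)
  rfl

theorem word_mem {H : Subgroup (Perm (Fin 6))} (ha : c[0, 3] * c[1, 4] * c[2, 5] ∈ H)
    (hb : c[1, 5, 4, 3, 2] ∈ H) (hc : c[2, 3, 5, 4] ∈ H) (x : Option (Fin 5) × Fin 5 × Fin 4) :
    word x ∈ H := by
  refine H.mul_mem ?_ (H.mul_mem (H.pow_mem hb _) (H.pow_mem hc _))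
  match x.1 with
  | none => exact H.one_mem
  | some k => exact H.mul_mem (H.pow_mem hb _) ha

end HumbertFixedGroup

open HumbertFixedGroup in
/-- the subgroup of S₆ generated by (0 3)(1 4)(2 5), (1 5 4 3 2) and
(2 3 5 4) (the fixed group of a Humbert component of discriminant Δ ≡ 5 mod 8)
has order 120. -/
theorem humbert_fixed_group_five_mod_eight_order :
    Nat.card (Subgroup.closure
      ({c[0, 3] * c[1, 4] * c[2, 5], c[1, 5, 4, 3, 2], c[2, 3, 5, 4]} :
        Set (Equiv.Perm (Fin 6)))) = 120 := by
  apply le_antisymm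
  · refine (Subgroup.card_le_of_le ((Subgroup.closure_le _).mpr ?_)).trans card_normalizer_le
    rintro g (rfl | rfl | rfl) <;> refine mem_normalizer_range_syntheme_iff.mpr ?_ <;>
      decide +kernel
  · have hmem (x) : word x ∈ Subgroup.closure
        ({c[0, 3] * c[1, 4] * c[2, 5], c[1, 5, 4, 3, 2], c[2, 3, 5, 4]} :
          Set (Perm (Fin 6))) :=
      word_mem (Subgroup.subset_closure (by simp)) (Subgroup.subset_closure (by simp))
        (Subgroup.subset_closure (by simp)) x
    have hinj : Function.Injective fun x => (⟨word x, hmem x⟩ : Subgroup.closure _) :=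
      fun _ _ h => word_injective (congrArg Subtype.val h)
    simpa using Nat.card_le_card_of_injective _ hinj
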